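/- (Robust self-testing of the weighted CHSH inequality.) There is a universal constant K > 0 with the following property. Let α > 0, μ = arctan(1/α) ∈ (0, π/2), and ε ≥ 0. Let H_A, H_B be finite-dimensional complex Hilbert spaces, M₁, M₂ self-adjoint operators on H_A with M₁² = M₂² = 1, N₁, N₂ self-adjoint operators on H_B with N₁² = N₂² = 1, and ψ ∈ H_A ⊗ H_B a unit vector with ⟨ψ, (α M₁⊗N₁ + α M₁⊗N₂ + M₂⊗N₁ − M₂⊗N₂)ψ⟩ ≥ 2√(1+α²) − ε. Then there exist finite-dimensional complex Hilbert spaces K_A, K_B, linear isometries V_A : H_A → ℂ² ⊗ K_A and V_B : H_B → ℂ² ⊗ K_B, and a unit vector junk ∈ K_A ⊗ K_B such that, identifying (ℂ² ⊗ K_A) ⊗ (ℂ² ⊗ K_B) with (ℂ² ⊗ ℂ²) ⊗ (K_A ⊗ K_B), for all x, y ∈ {0, 1, 2}: ‖(V_A ⊗ V_B)((M_x ⊗ N_y)ψ) − ((M̃_x ⊗ Ñ_y)|EPR⟩) ⊗ junk‖ ≤ K·(1/(cos²(μ)·sin(μ)^{1/2}) + 1/sin(μ)^{3/2})·√ε,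 where M₀, N₀, M̃₀, Ñ₀ denote identity operators, M̃₁ = σ_z, M̃₂ = σ_x, Ñ₁ = cos(μ)σ_z + sin(μ)σ_x, Ñ₂ = cos(μ)σ_z − sin(μ)σ_x. -/

import Mathlib

open Matrix Kronecker

/-- The action of a matrix on a vector of the corresponding Euclidean (Hilbert) space. -/
noncomputable def mApply {ι κ : Type*} [Fintype ι] (A : Matrix κ ι ℂ) (v : EuclideanSpace ℂ ι) :
    EuclideanSpace ℂ κ :=
  (WithLp.equiv 2 (κ → ℂ)).symm (A.mulVec (WithLp.equiv 2 (ι → ℂ) v))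

section Abstract

variable {E : Type*} [NormedAddCommGroup E] [InnerProductSpace ℂ E]

/-- The two blocks of the swap isometry. -/
noncomputable def swapT (Z X : E →ₗ[ℂ] E) : Fin 2 → (E →ₗ[ℂ] E) :=
  ![(1/2 : ℂ) • (LinearMap.id + Z), (1/2 : ℂ) • (X ∘ₗ (LinearMap.id - Z))]

lemma swapT_zero (Z X : E →ₗ[ℂ] E) (v : E) : swapT Z X 0 v = (1/2 : ℂ) • (v + Z v) := by
  simp [swapT]

lemma swapT_one (Z X : E →ₗ[ℂ] E) (v : E) : swapT Z X 1 v = (1/2 : ℂ) • (X v - X (Z v)) := by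
  simp [swapT]

lemma norm_half_smul (v : E) : ‖(1/2 : ℂ) • v‖ = ‖v‖ / 2 := by
  rw [norm_smul]; norm_num; ring

lemma swapT_norm_le (Z X : E →ₗ[ℂ] E) (hZ : ∀ v, ‖Z v‖ = ‖v‖) (hX : ∀ v, ‖X v‖ = ‖v‖)
    (i : Fin 2) (v : E) : ‖swapT Z X i v‖ ≤ ‖v‖ := by
  fin_cases i
  · have := norm_add_le v (Z v)
    simp only [Fin.zero_eta, swapT_zero, norm_half_smul]
    rw [hZ] at this; linarith
  · have := norm_sub_le (X v) (X (Z v))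
    simp only [Fin.mk_one, swapT_one, norm_half_smul]
    rw [hX, hX, hZ] at this; linarith

lemma swapT_step (Z X : E →ₗ[ℂ] E) (hZ2 : ∀ v, Z (Z v) = v)
    (hX : ∀ v, ‖X v‖ = ‖v‖) (hX2 : ∀ v, X (X v) = v) (ψ : E) (a : ℝ)
    (ha : ‖Z (X ψ) + X (Z ψ)‖ ≤ a) :
    swapT Z X 0 (Z ψ) = swapT Z X 0 ψ ∧ swapT Z X 1 (Z ψ) = - swapT Z X 1 ψ ∧
    ‖swapT Z X 0 (X ψ) - swapT Z X 1 ψ‖ ≤ a ∧ ‖swapT Z X 1 (X ψ) - swapT Z X 0 ψ‖ ≤ a := by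
  have h0 := norm_nonneg (Z (X ψ) + X (Z ψ))
  refine ⟨?_, ?_, ?_, ?_⟩
  · simp only [swapT_zero, hZ2]; module
  · simp only [swapT_one, hZ2]; module
  · have : swapT Z X 0 (X ψ) - swapT Z X 1 ψ = (1/2 : ℂ) • (Z (X ψ) + X (Z ψ)) := by
      simp only [swapT_zero, swapT_one]; module
    rw [this, norm_half_smul]; linarith
  · have : swapT Z X 1 (X ψ) - swapT Z X 0 ψ = (1/2 : ℂ) • X (- (Z (X ψ) + X (Z ψ))) := by
      simp only [swapT_zero, swapT_one, map_neg, map_add, hX2]; module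
    rw [this, norm_half_smul, hX, norm_neg]; linarith

lemma swapT_comm (Z X Y : E →ₗ[ℂ] E) (h1 : ∀ v, Z (Y v) = Y (Z v)) (h2 : ∀ v, X (Y v) = Y (X v))
    (i : Fin 2) (v : E) : swapT Z X i (Y v) = Y (swapT Z X i v) := by
  fin_cases i
  · simp [swapT_zero, h1]
  · simp [swapT_one, h1, h2]

lemma swapT_pair (M₁ M₂ Z X : E →ₗ[ℂ] E)
    (hM₁ : ∀ v, ‖M₁ v‖ = ‖v‖) (hM₁2 : ∀ v, M₁ (M₁ v) = v)
    (hM₂ : ∀ v, ‖M₂ v‖ = ‖v‖) (hM₂2 : ∀ v, M₂ (M₂ v) = v)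
    (hX : ∀ v, ‖X v‖ = ‖v‖)
    (c1Z : ∀ v, M₁ (Z v) = Z (M₁ v)) (c1X : ∀ v, M₁ (X v) = X (M₁ v))
    (c2Z : ∀ v, M₂ (Z v) = Z (M₂ v)) (c2X : ∀ v, M₂ (X v) = X (M₂ v))
    (ψ : E) (η : ℝ) (hdZ : ‖Z ψ - M₁ ψ‖ ≤ η) (hdX : ‖X ψ - M₂ ψ‖ ≤ η)
    (ha : ‖M₁ (M₂ ψ) + M₂ (M₁ ψ)‖ ≤ η) (i j : Fin 2) :
    ‖swapT M₁ M₂ i (swapT Z X j ψ) - (if i = j then (1:ℂ) else 0) • swapT M₁ M₂ 0 ψ‖ ≤ 3 * η := by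
  have hη : 0 ≤ η := (norm_nonneg _).trans hdZ
  have hT := swapT_norm_le M₁ M₂ hM₁ hM₂
  have hs := swapT_step M₁ M₂ hM₁2 hM₂ hM₂2 ψ η ha
  have e1 : ‖(1/2 : ℂ) • (Z ψ - M₁ ψ)‖ ≤ η := by rw [norm_half_smul]; linarith
  fin_cases i <;> fin_cases j <;> simp only [Fin.zero_eta, Fin.mk_one, if_true, zero_ne_one, one_ne_zero, if_false, one_smul, zero_smul, sub_zero, Fin.isValue]
  · have : swapT M₁ M₂ 0 (swapT Z X 0 ψ) - swapT M₁ M₂ 0 ψ = swapT M₁ M₂ 0 ((1/2 : ℂ) • (Z ψ - M₁ ψ)) := by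
      simp only [swapT_zero, map_add, map_smul, map_sub, hM₁2]; module
    rw [this]; linarith [hT 0 ((1/2 : ℂ) • (Z ψ - M₁ ψ))]
  · have : swapT M₁ M₂ 0 (swapT Z X 1 ψ) = X (swapT M₁ M₂ 0 (-((1/2 : ℂ) • (Z ψ - M₁ ψ)))) := by
      simp only [swapT_zero, swapT_one, map_add, map_smul, map_sub, map_neg, hM₁2, c1Z, c1X]; module
    rw [this, hX]; have := hT 0 (-((1/2 : ℂ) • (Z ψ - M₁ ψ))); rw [norm_neg] at this; linarith
  · have : swapT M₁ M₂ 1 (swapT Z X 0 ψ) = swapT M₁ M₂ 1 ((1/2 : ℂ) • (Z ψ - M₁ ψ)) := by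
      simp only [swapT_zero, swapT_one, map_add, map_smul, map_sub, hM₁2]; module
    rw [this]; linarith [hT 1 ((1/2 : ℂ) • (Z ψ - M₁ ψ))]
  · have : swapT M₁ M₂ 1 (swapT Z X 1 ψ) - swapT M₁ M₂ 0 ψ =
        X (swapT M₁ M₂ 1 (-((1/2 : ℂ) • (Z ψ - M₁ ψ)))) + swapT M₁ M₂ 1 (X ψ - M₂ ψ)
          + (swapT M₁ M₂ 1 (M₂ ψ) - swapT M₁ M₂ 0 ψ) := by
      simp only [swapT_zero, swapT_one, map_add, map_smul, map_sub, map_neg, hM₁2, c1Z, c1X, c2X, c2Z]; module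
    rw [this]
    refine (norm_add₃_le).trans ?_
    have h1 := hT 1 (-((1/2 : ℂ) • (Z ψ - M₁ ψ))); rw [norm_neg] at h1
    have h2 := hT 1 (X ψ - M₂ ψ)
    rw [hX]; linarith [hs.2.2.2]

lemma junk_exists (M₁ M₂ X : E →ₗ[ℂ] E)
    (hM₁ : ∀ v, ‖M₁ v‖ = ‖v‖) (hM₁2 : ∀ v, M₁ (M₁ v) = v)
    (hM₂ : ∀ v, ‖M₂ v‖ = ‖v‖) (hM₂2 : ∀ v, M₂ (M₂ v) = v)
    (hX : ∀ v, ‖X v‖ = ‖v‖)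
    (c1X : ∀ v, M₁ (X v) = X (M₁ v)) 
    (ψ : E) (hψ : ‖ψ‖ = 1) (η : ℝ) (hdX : ‖X ψ - M₂ ψ‖ ≤ η)
    (ha : ‖M₁ (M₂ ψ) + M₂ (M₁ ψ)‖ ≤ η) :
    ∃ junk : E, ‖junk‖ = 1 ∧ ‖swapT M₁ M₂ 0 ψ - ((Real.sqrt 2 : ℂ))⁻¹ • junk‖ ≤ 4 * η := by
  have hη : 0 ≤ η := (norm_nonneg _).trans hdX
  have hs := (swapT_step M₁ M₂ hM₁2 hM₂ hM₂2 ψ η ha).2.2.1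
  set v := swapT M₁ M₂ 0 ψ with hv
  set w := swapT M₁ M₂ 1 ψ with hw
  have hw' : ‖w‖ = ‖(1/2:ℂ) • (ψ - M₁ ψ)‖ := by
    rw [hw, swapT_one, norm_half_smul, norm_half_smul, ← map_sub, hM₂]
  have hsum : ‖v‖ ^ 2 + ‖w‖ ^ 2 = 1 := by
    rw [hw', hv, swapT_zero, norm_half_smul, norm_half_smul]
    have := parallelogram_law_with_norm ℂ ψ (M₁ ψ)
    rw [hM₁, hψ] at this
    nlinarith
  have hvw : |‖v‖ - ‖w‖| ≤ 2 * η := by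
    have h1 : ‖swapT M₁ M₂ 0 (X ψ)‖ = ‖v‖ := by
      rw [hv, swapT_zero, swapT_zero, c1X, ← map_add, norm_half_smul, norm_half_smul, hX]
    rw [← h1]
    refine (abs_norm_sub_norm_le _ _).trans ?_
    have h2 : swapT M₁ M₂ 0 (X ψ) - w = swapT M₁ M₂ 0 (X ψ - M₂ ψ) + (swapT M₁ M₂ 0 (M₂ ψ) - w) := by
      rw [map_sub]; abel
    rw [h2]
    refine (norm_add_le _ _).trans ?_
    linarith [swapT_norm_le M₁ M₂ hM₁ hM₂ 0 (X ψ - M₂ ψ)]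
  have hn0 := norm_nonneg v
  have hn1 := norm_nonneg w
  have hsq : Real.sqrt 2 ^ 2 = 2 := Real.sq_sqrt (by norm_num)
  have hs1 : 1 ≤ Real.sqrt 2 := by rw [Real.one_le_sqrt]; norm_num
  have hdiff : |‖v‖ - (Real.sqrt 2)⁻¹| ≤ 4 * η := by
    have hi : (Real.sqrt 2)⁻¹ = Real.sqrt 2 / 2 := by field_simp; linarith
    have h3 : |‖v‖ - (Real.sqrt 2)⁻¹| * (2 * ‖v‖ + Real.sqrt 2) = |‖v‖ - ‖w‖| * (‖v‖ + ‖w‖) := by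
      rw [← abs_of_nonneg (by positivity : 0 ≤ 2 * ‖v‖ + Real.sqrt 2),
        ← abs_of_nonneg (by positivity : 0 ≤ ‖v‖ + ‖w‖), ← abs_mul, ← abs_mul, hi]
      congr 1
      nlinarith
    have h4 : ‖v‖ + ‖w‖ ≤ 2 := by nlinarith [sq_nonneg (‖v‖-1), sq_nonneg (‖w‖-1)]
    have h5 : |‖v‖ - ‖w‖| * (‖v‖ + ‖w‖) ≤ 2 * η * 2 := by gcongr
    have h6 : |‖v‖ - (Real.sqrt 2)⁻¹| * 1 ≤ |‖v‖ - (Real.sqrt 2)⁻¹| * (2 * ‖v‖ + Real.sqrt 2) := by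
      gcongr; linarith
    linarith
  by_cases hz : v = 0
  · refine ⟨ψ, hψ, ?_⟩
    rw [hz, zero_sub, norm_neg, norm_smul, hψ, norm_inv, Complex.norm_real, Real.norm_of_nonneg (by positivity)]
    rw [hz, norm_zero, zero_sub, abs_neg, abs_of_nonneg (by positivity)] at hdiff
    linarith
  · have hne : ‖v‖ ≠ 0 := norm_ne_zero_iff.mpr hz
    refine ⟨((‖v‖ : ℂ))⁻¹ • v, ?_, ?_⟩
    · rw [norm_smul, norm_inv, Complex.norm_real, norm_norm, inv_mul_cancel₀ hne]
    · have : v - ((Real.sqrt 2 : ℂ))⁻¹ • ((‖v‖ : ℂ))⁻¹ • v = (((‖v‖ - (Real.sqrt 2)⁻¹) * ‖v‖⁻¹ : ℝ) : ℂ) • v := by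
        have : v = (1:ℂ) • v := (one_smul _ _).symm
        nth_rewrite 1 [this]
        rw [smul_smul, ← sub_smul]
        congr 1
        push_cast
        have : (‖v‖ : ℂ) ≠ 0 := by exact_mod_cast hne
        field_simp
      rw [this, norm_smul, Complex.norm_real, norm_mul, norm_inv, norm_norm, mul_assoc, inv_mul_cancel₀ hne, mul_one]
      exact hdiff

lemma vec_sos (m₁ m₂ n₁ n₂ : E) (h1 : ‖m₁‖ = 1) (h2 : ‖m₂‖ = 1) (h3 : ‖n₁‖ = 1) (h4 : ‖n₂‖ = 1)
    (c s ε : ℝ) (hs : 0 < s) (hcs : c ^ 2 + s ^ 2 = 1)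
    (h : 2 / s - ε ≤ c / s * (inner ℂ m₁ n₁).re + c / s * (inner ℂ m₁ n₂).re
      + (inner ℂ m₂ n₁).re - (inner ℂ m₂ n₂).re) :
    ‖(c:ℂ) • m₁ + (s:ℂ) • m₂ - n₁‖ ^ 2 + ‖(c:ℂ) • m₁ - (s:ℂ) • m₂ - n₂‖ ^ 2 ≤ 2 * ε * s := by
  have e1 : (2 / s - ε) * s = 2 - ε * s := by field_simp
  have h' := mul_le_mul_of_nonneg_right h hs.le
  rw [e1] at h'
  have e2 : (c / s * (inner ℂ m₁ n₁).re + c / s * (inner ℂ m₁ n₂).re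
      + (inner ℂ m₂ n₁).re - (inner ℂ m₂ n₂).re) * s = c * (inner ℂ m₁ n₁).re + c * (inner ℂ m₁ n₂).re
      + s * (inner ℂ m₂ n₁).re - s * (inner ℂ m₂ n₂).re := by field_simp
  rw [e2] at h'
  rw [@norm_sub_sq ℂ, @norm_sub_sq ℂ, @norm_sub_sq ℂ, @norm_add_sq ℂ]
  simp only [inner_add_left, inner_sub_left, inner_smul_left, inner_smul_right, norm_smul, h1, h2, h3, h4,
    Complex.norm_real, Complex.conj_ofReal, map_add, map_sub, RCLike.re_to_complex, Complex.re_ofReal_mul,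
    mul_one, Real.norm_eq_abs, sq_abs]
  nlinarith

/-- Regularization. -/
lemma regularize (M Z S : E →ₗ[ℂ] E) 
    (hM : ∀ v, ‖M v‖ = ‖v‖) (hM2 : ∀ v, M (M v) = v) (hMs : ∀ u v, inner ℂ (M u) v = inner ℂ u (M v))
    (hZ : ∀ v, ‖Z v‖ = ‖v‖) (hZ2 : ∀ v, Z (Z v) = v) (hZs : ∀ u v, inner ℂ (Z u) v = inner ℂ u (Z v))
    (cMZ : ∀ v, M (Z v) = Z (M v)) (cMS : ∀ v, M (S v) = S (M v)) (cZS : ∀ v, Z (S v) = S (Z v))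
    (hpos : ∀ v, 0 ≤ (inner ℂ v (Z (S v))).re) (r : ℝ) (hr : 0 ≤ r) (ψ : E) :
    ‖Z ψ - (r:ℂ) • S ψ‖ ≤ ‖M ψ - (r:ℂ) • S ψ‖ := by
  have key : (inner ℂ (M ψ) (S ψ)).re ≤ (inner ℂ (Z ψ) (S ψ)).re := by
    have h := hpos (ψ - M (Z ψ))
    have e : (inner ℂ (ψ - M (Z ψ)) (Z (S (ψ - M (Z ψ)))) : ℂ)
        = 2 * inner ℂ (Z ψ) (S ψ) - 2 * inner ℂ (M ψ) (S ψ) := by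
      simp only [map_sub, inner_sub_left, inner_sub_right, hMs, hZs, cMZ, cMS, cZS, hM2, hZ2]
      simp only [← cMS, ← cZS]
      ring
    rw [e] at h
    simp at h
    linarith
  refine (pow_le_pow_iff_left₀ (norm_nonneg _) (norm_nonneg _) two_ne_zero).mp ?_
  rw [@norm_sub_sq ℂ, @norm_sub_sq ℂ, hM, hZ]
  simp only [inner_smul_right, RCLike.re_to_complex, Complex.re_ofReal_mul]
  nlinarith


/-- Ideal Alice observables. -/
noncomputable def sigA : Fin 3 → Matrix (Fin 2) (Fin 2) ℂ :=
  ![1, !![1, 0; 0, -1], !![0, 1; 1, 0]]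

/-- Ideal Bob observables. -/
noncomputable def tauB (c s : ℝ) : Fin 3 → Matrix (Fin 2) (Fin 2) ℂ :=
  ![1, (c : ℂ) • !![1, 0; 0, -1] + (s : ℂ) • !![0, 1; 1, 0],
    (c : ℂ) • !![1, 0; 0, -1] - (s : ℂ) • !![0, 1; 1, 0]]

lemma sigA_norm_le (x : Fin 3) (i j : Fin 2) : ‖sigA x i j‖ ≤ 1 := by
  fin_cases x <;> fin_cases i <;> fin_cases j <;> simp [sigA]

lemma tauB_norm_le (c s : ℝ) (hc : |c| ≤ 1) (hs : |s| ≤ 1) (x : Fin 3) (i j : Fin 2) :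
    ‖tauB c s x i j‖ ≤ 1 := by
  fin_cases x <;> fin_cases i <;> fin_cases j <;> simp [tauB, hc, hs]

lemma sideA (Z X : E →ₗ[ℂ] E) (hZ2 : ∀ v, Z (Z v) = v)
    (hX : ∀ v, ‖X v‖ = ‖v‖) (hX2 : ∀ v, X (X v) = v) (ψ : E) (a : ℝ)
    (ha : ‖Z (X ψ) + X (Z ψ)‖ ≤ a) (x : Fin 3) (i : Fin 2) :
    ‖swapT Z X i ((![LinearMap.id, Z, X] : Fin 3 → (E →ₗ[ℂ] E)) x ψ) - ∑ l, sigA x i l • swapT Z X l ψ‖ ≤ a := by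
  have h0 : 0 ≤ a := (norm_nonneg _).trans ha
  obtain ⟨h1, h2, h3, h4⟩ := swapT_step Z X hZ2 hX hX2 ψ a ha
  fin_cases x <;> fin_cases i <;> simp [sigA, h1, h2, h3, h4, h0]

lemma sideB (Z X N₁ N₂ : E →ₗ[ℂ] E) (hZ : ∀ v, ‖Z v‖ = ‖v‖) (hZ2 : ∀ v, Z (Z v) = v)
    (hX : ∀ v, ‖X v‖ = ‖v‖) (hX2 : ∀ v, X (X v) = v) (ψ : E) (a b c s : ℝ)
    (hs0 : 0 ≤ s) (hs1 : s ≤ 1)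
    (ha : ‖Z (X ψ) + X (Z ψ)‖ ≤ a)
    (hN₁ : ‖N₁ ψ - ((c:ℂ) • Z ψ + (s:ℂ) • X ψ)‖ ≤ b)
    (hN₂ : ‖N₂ ψ - ((c:ℂ) • Z ψ - (s:ℂ) • X ψ)‖ ≤ b) (x : Fin 3) (i : Fin 2) :
    ‖swapT Z X i ((![LinearMap.id, N₁, N₂] : Fin 3 → (E →ₗ[ℂ] E)) x ψ) - ∑ l, tauB c s x i l • swapT Z X l ψ‖ ≤ b + a := by
  have h0 : 0 ≤ a := (norm_nonneg _).trans ha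
  have h0' : 0 ≤ b := (norm_nonneg _).trans hN₁
  obtain ⟨h1, h2, h3, h4⟩ := swapT_step Z X hZ2 hX hX2 ψ a ha
  have hT := swapT_norm_le Z X hZ hX
  have hsm : ∀ w : E, ‖w‖ ≤ a → ‖(s:ℂ) • w‖ ≤ a := by
    intro w hw
    rw [norm_smul, Complex.norm_real, Real.norm_of_nonneg hs0]
    nlinarith [norm_nonneg w]
  have hn : ∀ w : E, ‖w‖ ≤ a → ‖-w‖ ≤ a := fun w hw => by rwa [norm_neg]
  have gen : ∀ (i : Fin 2) (u v t w : E), ‖u - v‖ ≤ b → t = w → ‖w‖ ≤ a →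
      ‖swapT Z X i (u - v) + t‖ ≤ b + a := by
    intro i u v t w huv ht hw
    rw [ht]
    exact (norm_add_le _ _).trans <| add_le_add ((hT i _).trans huv) hw
  fin_cases x <;> fin_cases i
  · simp [tauB]; positivity
  · simp [tauB]; positivity
  · have := gen 0 _ _ _ _ hN₁ rfl (hsm _ h3)
    convert this using 2
    simp [tauB, h1]; module
  · have := gen 1 _ _ _ _ hN₁ rfl (hsm _ h4)
    convert this using 2
    simp [tauB, h2]; module
  · have := gen 0 _ _ _ _ hN₂ rfl (hn _ (hsm _ h3))
    convert this using 2
    simp [tauB, h1]; module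
  · have := gen 1 _ _ _ _ hN₂ rfl (hn _ (hsm _ h4))
    convert this using 2
    simp [tauB, h2]; module

lemma core (M₁ M₂ N₁ N₂ Z X : E →ₗ[ℂ] E)
    (hM₁ : ∀ v, ‖M₁ v‖ = ‖v‖) (hM₁2 : ∀ v, M₁ (M₁ v) = v) (hM₁s : ∀ u v, inner ℂ (M₁ u) v = inner ℂ u (M₁ v))
    (hM₂ : ∀ v, ‖M₂ v‖ = ‖v‖) (hM₂2 : ∀ v, M₂ (M₂ v) = v) (hM₂s : ∀ u v, inner ℂ (M₂ u) v = inner ℂ u (M₂ v))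
    (hN₁ : ∀ v, ‖N₁ v‖ = ‖v‖) (hN₁2 : ∀ v, N₁ (N₁ v) = v)
    (hN₂ : ∀ v, ‖N₂ v‖ = ‖v‖)
    (hZ : ∀ v, ‖Z v‖ = ‖v‖) (hZ2 : ∀ v, Z (Z v) = v) (hZs : ∀ u v, inner ℂ (Z u) v = inner ℂ u (Z v))
    (hX : ∀ v, ‖X v‖ = ‖v‖) (hX2 : ∀ v, X (X v) = v) (hXs : ∀ u v, inner ℂ (X u) v = inner ℂ u (X v))
    (c11 : ∀ v, M₁ (N₁ v) = N₁ (M₁ v)) (c12 : ∀ v, M₁ (N₂ v) = N₂ (M₁ v))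
    (c21 : ∀ v, M₂ (N₁ v) = N₁ (M₂ v)) (c22 : ∀ v, M₂ (N₂ v) = N₂ (M₂ v))
    (c1Z : ∀ v, M₁ (Z v) = Z (M₁ v)) (c1X : ∀ v, M₁ (X v) = X (M₁ v))
    (c2Z : ∀ v, M₂ (Z v) = Z (M₂ v)) (c2X : ∀ v, M₂ (X v) = X (M₂ v))
    (cZS : ∀ v, Z (N₁ v + N₂ v) = N₁ (Z v) + N₂ (Z v))
    (cXS : ∀ v, X (N₁ v - N₂ v) = N₁ (X v) - N₂ (X v))
    (hZpos : ∀ v, 0 ≤ (inner ℂ v (Z (N₁ v + N₂ v))).re)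
    (hXpos : ∀ v, 0 ≤ (inner ℂ v (X (N₁ v - N₂ v))).re)
    (ψ : E) (hψ : ‖ψ‖ = 1) (c s ε : ℝ) (hc : 0 < c) (hs : 0 < s) (hcs : c ^ 2 + s ^ 2 = 1)
    (h : 2 / s - ε ≤ c / s * (inner ℂ ψ (M₁ (N₁ ψ))).re + c / s * (inner ℂ ψ (M₁ (N₂ ψ))).re
      + (inner ℂ ψ (M₂ (N₁ ψ))).re - (inner ℂ ψ (M₂ (N₂ ψ))).re) :
    ∃ junk : E, ‖junk‖ = 1 ∧ ∀ (x y : Fin 3) (i j : Fin 2),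
      ‖swapT M₁ M₂ i (swapT Z X j ((![LinearMap.id, M₁, M₂] : Fin 3 → (E →ₗ[ℂ] E)) x
        ((![LinearMap.id, N₁, N₂] : Fin 3 → (E →ₗ[ℂ] E)) y ψ)))
        - (∑ l, ∑ k, sigA x i l * tauB c s y j k * (if l = k then ((Real.sqrt 2 : ℂ))⁻¹ else 0)) • junk‖
        ≤ 200 * (Real.sqrt (2 * ε * s) / (c * s)) := by
  have hc1 : c ≤ 1 := by nlinarith
  have hs1 : s ≤ 1 := by nlinarith
  set δ := Real.sqrt (2 * ε * s) with hδ
  set η := δ / (c * s) with hη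
  have hδ0 : 0 ≤ δ := Real.sqrt_nonneg _
  have hη0 : 0 ≤ η := by positivity
  have hδη : δ = η * (c * s) := by rw [hη]; field_simp
  have hcs1 : c * s ≤ 1 := by nlinarith
  have hδ1 : δ ≤ η := by rw [hδη]; nlinarith
  have hδc : δ / c ≤ η := by rw [hδη, div_le_iff₀ hc]; nlinarith [mul_nonneg hη0 hc.le]
  have hδs : δ / s ≤ η := by rw [hδη, div_le_iff₀ hs]; nlinarith [mul_nonneg hη0 hs.le]
  have sos := vec_sos (M₁ ψ) (M₂ ψ) (N₁ ψ) (N₂ ψ) (by rw [hM₁, hψ]) (by rw [hM₂, hψ]) (by rw [hN₁, hψ])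
    (by rw [hN₂, hψ]) c s ε hs hcs (by rw [hM₁s, hM₁s, hM₂s, hM₂s]; exact h)
  have e1 : ‖(c:ℂ) • M₁ ψ + (s:ℂ) • M₂ ψ - N₁ ψ‖ ≤ δ := Real.le_sqrt_of_sq_le (by nlinarith [sq_nonneg ‖(c:ℂ) • M₁ ψ - (s:ℂ) • M₂ ψ - N₂ ψ‖])
  have e2 : ‖(c:ℂ) • M₁ ψ - (s:ℂ) • M₂ ψ - N₂ ψ‖ ≤ δ := Real.le_sqrt_of_sq_le (by nlinarith [sq_nonneg ‖(c:ℂ) • M₁ ψ + (s:ℂ) • M₂ ψ - N₁ ψ‖])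
  clear_value δ η
  have hcC : (c:ℂ) ≠ 0 := by exact_mod_cast hc.ne'
  have hsC : (s:ℂ) ≠ 0 := by exact_mod_cast hs.ne'
  set D₁ := (c:ℂ) • M₁ ψ + (s:ℂ) • M₂ ψ - N₁ ψ with hD₁
  set D₂ := (c:ℂ) • M₁ ψ - (s:ℂ) • M₂ ψ - N₂ ψ with hD₂
  have nsm : ∀ (r : ℝ) (v : E), 0 ≤ r → ‖(r:ℂ) • v‖ = r * ‖v‖ := by
    intro r v hr
    rw [norm_smul, Complex.norm_real, Real.norm_of_nonneg hr]
  -- closeness to the unregularized operators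
  have f1 : ‖M₁ ψ - ((1 / (2 * c) : ℝ) : ℂ) • (N₁ ψ + N₂ ψ)‖ ≤ η := by
    have : M₁ ψ - ((1 / (2 * c) : ℝ) : ℂ) • (N₁ ψ + N₂ ψ) = ((1 / (2 * c) : ℝ) : ℂ) • (D₁ + D₂) := by
      have e : M₁ ψ = ((1 / (2 * c) : ℝ) : ℂ) • (((2 * c : ℝ) : ℂ) • M₁ ψ) := by
        rw [smul_smul, ← Complex.ofReal_mul, one_div_mul_cancel (by positivity)]; simp
      conv_lhs => rw [e]
      rw [← smul_sub]
      congr 1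
      rw [hD₁, hD₂]; push_cast; module
    rw [this, nsm _ _ (by positivity)]
    have h1 := norm_add_le D₁ D₂
    calc 1 / (2 * c) * ‖D₁ + D₂‖ ≤ 1 / (2 * c) * (2 * δ) := by gcongr; linarith
      _ = δ / c := by field_simp
      _ ≤ η := hδc
  have f2 : ‖M₂ ψ - ((1 / (2 * s) : ℝ) : ℂ) • (N₁ ψ - N₂ ψ)‖ ≤ η := by
    have : M₂ ψ - ((1 / (2 * s) : ℝ) : ℂ) • (N₁ ψ - N₂ ψ) = ((1 / (2 * s) : ℝ) : ℂ) • (D₁ - D₂) := by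
      have e : M₂ ψ = ((1 / (2 * s) : ℝ) : ℂ) • (((2 * s : ℝ) : ℂ) • M₂ ψ) := by
        rw [smul_smul, ← Complex.ofReal_mul, one_div_mul_cancel (by positivity)]; simp
      conv_lhs => rw [e]
      rw [← smul_sub]
      congr 1
      rw [hD₁, hD₂]; push_cast; module
    rw [this, nsm _ _ (by positivity)]
    have h1 := norm_sub_le D₁ D₂
    calc 1 / (2 * s) * ‖D₁ - D₂‖ ≤ 1 / (2 * s) * (2 * δ) := by gcongr; linarith
      _ = δ / s := by field_simp
      _ ≤ η := hδs
  have g1 := regularize M₁ Z (N₁ + N₂) hM₁ hM₁2 hM₁s hZ hZ2 hZs c1Z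
    (by intro v; simp [c11, c12]) (by intro v; simpa using cZS v) (by intro v; simpa using hZpos v)
    (1 / (2 * c)) (by positivity) ψ
  have g2 := regularize M₂ X (N₁ - N₂) hM₂ hM₂2 hM₂s hX hX2 hXs c2X
    (by intro v; simp [c21, c22]) (by intro v; simpa using cXS v) (by intro v; simpa using hXpos v)
    (1 / (2 * s)) (by positivity) ψ
  rw [LinearMap.add_apply] at g1
  rw [LinearMap.sub_apply] at g2
  have dZ : ‖Z ψ - M₁ ψ‖ ≤ 2 * η := by
    have := norm_sub_le (Z ψ - ((1 / (2 * c) : ℝ) : ℂ) • (N₁ ψ + N₂ ψ)) (M₁ ψ - ((1 / (2 * c) : ℝ) : ℂ) • (N₁ ψ + N₂ ψ))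
    rw [sub_sub_sub_cancel_right] at this
    linarith
  have dX : ‖X ψ - M₂ ψ‖ ≤ 2 * η := by
    have := norm_sub_le (X ψ - ((1 / (2 * s) : ℝ) : ℂ) • (N₁ ψ - N₂ ψ)) (M₂ ψ - ((1 / (2 * s) : ℝ) : ℂ) • (N₁ ψ - N₂ ψ))
    rw [sub_sub_sub_cancel_right] at this
    linarith
  have aA : ‖M₁ (M₂ ψ) + M₂ (M₁ ψ)‖ ≤ 3 * η := by
    have e : ((c * s : ℝ) : ℂ) • (M₁ (M₂ ψ) + M₂ (M₁ ψ)) = (c:ℂ) • M₁ D₁ + (s:ℂ) • M₂ D₁ + N₁ D₁ := by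
      have hcs' : ((c:ℂ) ^ 2 + (s:ℂ) ^ 2) • ψ = ψ := by
        have : (c:ℂ) ^ 2 + (s:ℂ) ^ 2 = 1 := by exact_mod_cast hcs
        rw [this, one_smul]
      have : ((c * s : ℝ) : ℂ) • (M₁ (M₂ ψ) + M₂ (M₁ ψ)) = ((c * s : ℝ) : ℂ) • (M₁ (M₂ ψ) + M₂ (M₁ ψ)) + ((c:ℂ) ^ 2 + (s:ℂ) ^ 2) • ψ - ψ := by
        rw [hcs']; abel
      rw [this, hD₁]
      simp only [map_sub, map_add, map_smul, hM₁2, hM₂2, hN₁2, c11, c21]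
      push_cast
      module
    have h1 := norm_add₃_le (a := (c:ℂ) • M₁ D₁) (b := (s:ℂ) • M₂ D₁) (c := N₁ D₁)
    rw [← e, nsm _ _ (by positivity), nsm _ _ hc.le, nsm _ _ hs.le, hM₁, hM₂, hN₁] at h1
    have h2 : c * ‖D₁‖ ≤ 1 * δ := by gcongr
    have h3 : s * ‖D₁‖ ≤ 1 * δ := by gcongr
    have h4 : (c * s) * ‖M₁ (M₂ ψ) + M₂ (M₁ ψ)‖ ≤ (c * s) * (3 * η) := by
      rw [hδη] at h2 h3 e1; linarith
    exact le_of_mul_le_mul_left h4 (by positivity)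
  have aB : ‖Z (X ψ) + X (Z ψ)‖ ≤ 11 * η := by
    have e : Z (X ψ) + X (Z ψ) = (Z (X ψ - M₂ ψ) + M₂ (Z ψ - M₁ ψ)) + (X (Z ψ - M₁ ψ) + M₁ (X ψ - M₂ ψ))
        + (M₁ (M₂ ψ) + M₂ (M₁ ψ)) := by
      simp only [map_sub, c1X, c2Z]; abel
    rw [e]
    have h1 := norm_add₃_le (a := Z (X ψ - M₂ ψ) + M₂ (Z ψ - M₁ ψ)) (b := X (Z ψ - M₁ ψ) + M₁ (X ψ - M₂ ψ)) (c := M₁ (M₂ ψ) + M₂ (M₁ ψ))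
    have h2 := norm_add_le (Z (X ψ - M₂ ψ)) (M₂ (Z ψ - M₁ ψ))
    have h3 := norm_add_le (X (Z ψ - M₁ ψ)) (M₁ (X ψ - M₂ ψ))
    rw [hZ, hM₂] at h2
    rw [hX, hM₁] at h3
    linarith
  have scZ : ‖(c:ℂ) • (Z ψ - M₁ ψ)‖ ≤ 2 * η := by
    rw [nsm _ _ hc.le]; nlinarith [norm_nonneg (Z ψ - M₁ ψ)]
  have ssX : ‖(s:ℂ) • (X ψ - M₂ ψ)‖ ≤ 2 * η := by
    rw [nsm _ _ hs.le]; nlinarith [norm_nonneg (X ψ - M₂ ψ)]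
  have dN₁ : ‖N₁ ψ - ((c:ℂ) • Z ψ + (s:ℂ) • X ψ)‖ ≤ 5 * η := by
    have e : N₁ ψ - ((c:ℂ) • Z ψ + (s:ℂ) • X ψ) = -(D₁ + (c:ℂ) • (Z ψ - M₁ ψ) + (s:ℂ) • (X ψ - M₂ ψ)) := by
      rw [hD₁]; module
    rw [e, norm_neg]
    refine norm_add₃_le.trans ?_
    linarith
  have dN₂ : ‖N₂ ψ - ((c:ℂ) • Z ψ - (s:ℂ) • X ψ)‖ ≤ 5 * η := by
    have e : N₂ ψ - ((c:ℂ) • Z ψ - (s:ℂ) • X ψ) = -(D₂ + (c:ℂ) • (Z ψ - M₁ ψ) + -((s:ℂ) • (X ψ - M₂ ψ))) := by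
      rw [hD₂]; module
    rw [e, norm_neg]
    refine norm_add₃_le.trans ?_
    rw [norm_neg]
    linarith
  obtain ⟨junk, hj, hjv⟩ := junk_exists M₁ M₂ X hM₁ hM₁2 hM₂ hM₂2 hX c1X ψ hψ (3 * η) (by linarith) aA
  refine ⟨junk, hj, ?_⟩
  have sA := sideA M₁ M₂ hM₁2 hM₂ hM₂2 ψ (3 * η) aA
  have sB := sideB Z X N₁ N₂ hZ hZ2 hX hX2 ψ (11 * η) (5 * η) c s hs.le hs1 aB dN₁ dN₂
  have sP := swapT_pair M₁ M₂ Z X hM₁ hM₁2 hM₂ hM₂2 hX c1Z c1X c2Z c2X ψ (3 * η) (by linarith) (by linarith) aA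
  have hT := swapT_norm_le M₁ M₂ hM₁ hM₂
  have hR := swapT_norm_le Z X hZ hX
  have hσ := sigA_norm_le
  have hτ := tauB_norm_le c s (by rw [abs_of_pos hc]; exact hc1) (by rw [abs_of_pos hs]; exact hs1)
  intro x y i j
  set Mx := (![LinearMap.id, M₁, M₂] : Fin 3 → (E →ₗ[ℂ] E)) x with hMx
  set φ := (![LinearMap.id, N₁, N₂] : Fin 3 → (E →ₗ[ℂ] E)) y ψ with hφ
  set v := swapT M₁ M₂ 0 ψ with hv
  have Mxn : ∀ w, ‖Mx w‖ = ‖w‖ := by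
    intro w; rw [hMx]; fin_cases x <;> simp [hM₁, hM₂]
  have cR : ∀ (k : Fin 2) w, swapT Z X k (Mx w) = Mx (swapT Z X k w) := by
    intro k w
    apply swapT_comm
    · intro u; rw [hMx]; fin_cases x <;> simp [c1Z, c2Z]
    · intro u; rw [hMx]; fin_cases x <;> simp [c1X, c2X]
  have cTR : ∀ (l k : Fin 2) w, swapT M₁ M₂ l (swapT Z X k w) = swapT Z X k (swapT M₁ M₂ l w) := by
    intro l k w
    apply swapT_comm
    · intro u; exact (swapT_comm Z X M₁ (fun v => (c1Z v).symm) (fun v => (c1X v).symm) k u).symm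
    · intro u; exact (swapT_comm Z X M₂ (fun v => (c2Z v).symm) (fun v => (c2X v).symm) k u).symm
  -- telescoping
  set F₁ := swapT Z X j φ - ∑ k, tauB c s y j k • swapT Z X k ψ with hF₁
  set F₂ := swapT M₁ M₂ i (Mx ψ) - ∑ l, sigA x i l • swapT M₁ M₂ l ψ with hF₂
  set F₃ : Fin 2 → Fin 2 → E := fun l k => swapT M₁ M₂ l (swapT Z X k ψ) - (if l = k then (1:ℂ) else 0) • v with hF₃
  have hF₃n : ∀ l k, ‖F₃ l k‖ ≤ 9 * η := fun l k => (sP l k).trans (by linarith)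
  set F₄ := v - ((Real.sqrt 2 : ℂ))⁻¹ • junk with hF₄
  have tele : swapT M₁ M₂ i (swapT Z X j (Mx φ))
      - (∑ l, ∑ k, sigA x i l * tauB c s y j k * (if l = k then ((Real.sqrt 2 : ℂ))⁻¹ else 0)) • junk
      = swapT M₁ M₂ i (Mx F₁) + ∑ k, tauB c s y j k • swapT Z X k F₂
        + ∑ l, ∑ k, (sigA x i l * tauB c s y j k) • F₃ l k
        + ∑ l, ∑ k, (sigA x i l * tauB c s y j k * (if l = k then 1 else 0)) • F₄ := by
    have t : ∀ k, swapT M₁ M₂ i (Mx (swapT Z X k ψ)) = swapT Z X k (swapT M₁ M₂ i (Mx ψ)) := by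
      intro k; rw [← cR, cTR]
    rw [cR, hF₁, hF₂, hF₄]
    simp only [hF₃, Fin.sum_univ_two, map_sub, map_add, map_smul, t, cTR]
    simp
    module
  rw [tele]
  have b1 : ‖swapT M₁ M₂ i (Mx F₁)‖ ≤ 16 * η := by
    refine (hT i _).trans ?_
    rw [Mxn]; exact (sB y j).trans (by linarith)
  have b2 : ‖∑ k, tauB c s y j k • swapT Z X k F₂‖ ≤ 6 * η := by
    refine (norm_sum_le_of_le _ (f := fun k => tauB c s y j k • swapT Z X k F₂) (n := fun _ => 3 * η) ?_).trans ?_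
    · intro k _
      rw [norm_smul]
      have := (hR k F₂).trans (sA x i)
      have := mul_le_mul (hτ y j k) this (norm_nonneg _) zero_le_one
      linarith
    · simp; linarith
  have b0 : ∀ l k, ‖sigA x i l * tauB c s y j k‖ ≤ 1 := by
    intro l k
    rw [norm_mul]
    have := mul_le_mul (hσ x i l) (hτ y j k) (norm_nonneg _) zero_le_one
    linarith
  have gsum : ∀ (G : Fin 2 → Fin 2 → E) (B : ℝ), (∀ l k, ‖G l k‖ ≤ B) → ‖∑ l, ∑ k, G l k‖ ≤ 4 * B := by
    intro G B hG
    refine (norm_sum_le_of_le _ (n := fun _ => 2 * B) (fun l _ => ?_)).trans (le_of_eq (by simp; ring))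
    exact (norm_sum_le_of_le _ (n := fun _ => B) (fun k _ => hG l k)).trans (le_of_eq (by simp))
  have b3 := gsum (fun l k => (sigA x i l * tauB c s y j k) • F₃ l k) (9 * η) (by
    intro l k
    rw [norm_smul]
    have := mul_le_mul (b0 l k) (hF₃n l k) (norm_nonneg _) zero_le_one
    linarith)
  have b4 := gsum (fun l k => (sigA x i l * tauB c s y j k * (if l = k then 1 else 0)) • F₄) (12 * η) (by
    intro l k
    rw [norm_smul, norm_mul]
    have h1 : ‖(if l = k then (1:ℂ) else 0)‖ ≤ 1 := by split_ifs <;> simp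
    have h2 := mul_le_mul (b0 l k) h1 (norm_nonneg _) zero_le_one
    rw [one_mul] at h2
    have := mul_le_mul h2 hjv (norm_nonneg _) zero_le_one
    linarith)
  refine (norm_add_le _ _).trans ?_
  have b5 := norm_add₃_le (a := swapT M₁ M₂ i (Mx F₁)) (b := ∑ k, tauB c s y j k • swapT Z X k F₂)
    (c := ∑ l, ∑ k, (sigA x i l * tauB c s y j k) • F₃ l k)
  linarith

end Abstract

section Concrete

open scoped ComplexOrder

lemma sub_kron {a b : ℕ} (A A' : Matrix (Fin a) (Fin a) ℂ) (B : Matrix (Fin b) (Fin b) ℂ) :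
    (A - A') ⊗ₖ B = A ⊗ₖ B - A' ⊗ₖ B := by
  ext i j; simp [Matrix.kroneckerMap_apply, sub_mul]

lemma kron_sub {a b : ℕ} (A : Matrix (Fin a) (Fin a) ℂ) (B B' : Matrix (Fin b) (Fin b) ℂ) :
    A ⊗ₖ (B - B') = A ⊗ₖ B - A ⊗ₖ B' := by
  ext i j; simp [Matrix.kroneckerMap_apply, mul_sub]

lemma exists_sgn {n : Type*} [Fintype n] [DecidableEq n] (S : Matrix n n ℂ) (hS : S.IsHermitian) :
    ∃ Z : Matrix n n ℂ, Z.IsHermitian ∧ Z * Z = 1 ∧ Z * S = S * Z ∧ (Z * S).PosSemidef := by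
  classical
  set U : Matrix n n ℂ := (hS.eigenvectorUnitary : Matrix n n ℂ) with hU
  have hUU : Uᴴ * U = 1 := by
    have := (Unitary.mem_iff.mp hS.eigenvectorUnitary.2).1
    rwa [Matrix.star_eq_conjTranspose] at this
  have hUU' : U * Uᴴ = 1 := by
    have := (Unitary.mem_iff.mp hS.eigenvectorUnitary.2).2
    rwa [Matrix.star_eq_conjTranspose] at this
  set D : Matrix n n ℂ := Matrix.diagonal (fun i => (hS.eigenvalues i : ℂ)) with hD
  have hSp : S = U * D * Uᴴ := by
    have := hS.spectral_theorem
    rw [Unitary.conjStarAlgAut_apply] at this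
    exact this
  set G : Matrix n n ℂ := Matrix.diagonal (fun i => if 0 ≤ hS.eigenvalues i then (1:ℂ) else -1) with hG
  have hGG : G * G = 1 := by
    rw [hG, Matrix.diagonal_mul_diagonal, ← Matrix.diagonal_one]
    congr 1; funext i; split_ifs <;> simp
  have hGD : G * D = D * G := by
    rw [hG, hD, Matrix.diagonal_mul_diagonal, Matrix.diagonal_mul_diagonal]
    congr 1; funext i; ring
  have hGp : (G * D).PosSemidef := by
    rw [hG, hD, Matrix.diagonal_mul_diagonal, Matrix.posSemidef_diagonal_iff]
    intro i
    split_ifs with h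
    · rw [one_mul]; exact_mod_cast h
    · have : (0:ℝ) ≤ - hS.eigenvalues i := by linarith
      have h2 : (-1 : ℂ) * (hS.eigenvalues i : ℂ) = ((- hS.eigenvalues i : ℝ) : ℂ) := by push_cast; ring
      rw [h2]; exact_mod_cast this
  have hGH : Gᴴ = G := by
    rw [hG, Matrix.diagonal_conjTranspose]
    congr 1; funext i; simp only [Pi.star_apply]; split_ifs <;> simp
  have conjmul : ∀ A B : Matrix n n ℂ, (U * A * Uᴴ) * (U * B * Uᴴ) = U * (A * B) * Uᴴ := by
    intro A B
    calc (U * A * Uᴴ) * (U * B * Uᴴ) = U * A * (Uᴴ * U) * B * Uᴴ := by simp only [Matrix.mul_assoc]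
      _ = _ := by rw [hUU]; simp only [Matrix.mul_assoc, Matrix.mul_one, Matrix.one_mul]
  clear_value D
  refine ⟨U * G * Uᴴ, ?_, ?_, ?_, ?_⟩
  · rw [Matrix.IsHermitian]
    simp only [Matrix.conjTranspose_mul, Matrix.conjTranspose_conjTranspose, hGH, Matrix.mul_assoc]
  · rw [conjmul, hGG, Matrix.mul_one, hUU']
  · conv_lhs => rw [hSp]
    conv_rhs => rw [hSp]
    rw [conjmul, conjmul, hGD]
  · have e : U * G * Uᴴ * S = U * (G * D) * Uᴴ := by
      conv_lhs => rw [hSp]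
      rw [conjmul]
    rw [e]
    exact hGp.mul_mul_conjTranspose_same U

/-- `mApply` of a square matrix, as a linear map. -/
noncomputable def opL {n : Type*} [Fintype n] (A : Matrix n n ℂ) :
    EuclideanSpace ℂ n →ₗ[ℂ] EuclideanSpace ℂ n where
  toFun := mApply A
  map_add' u v := by ext i; simp [mApply, Matrix.mulVec_add]
  map_smul' r v := by ext i; simp [mApply, Matrix.mulVec_smul]

lemma opL_apply {n : Type*} [Fintype n] (A : Matrix n n ℂ) (v : EuclideanSpace ℂ n) :
    opL A v = mApply A v := rfl

lemma mApply_mul {ι κ l : Type*} [Fintype ι] [Fintype κ] (A : Matrix l κ ℂ) (B : Matrix κ ι ℂ)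
    (v : EuclideanSpace ℂ ι) : mApply (A * B) v = mApply A (mApply B v) := by
  ext i; simp [mApply, Matrix.mulVec_mulVec]

lemma mApply_add {ι κ : Type*} [Fintype ι] (A B : Matrix κ ι ℂ)
    (v : EuclideanSpace ℂ ι) : mApply (A + B) v = mApply A v + mApply B v := by
  ext i; simp [mApply, Matrix.add_mulVec]

lemma mApply_sub {ι κ : Type*} [Fintype ι] (A B : Matrix κ ι ℂ)
    (v : EuclideanSpace ℂ ι) : mApply (A - B) v = mApply A v - mApply B v := by
  ext i; simp [mApply, Matrix.sub_mulVec]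

lemma mApply_smul {ι κ : Type*} [Fintype ι] (r : ℂ) (A : Matrix κ ι ℂ)
    (v : EuclideanSpace ℂ ι) : mApply (r • A) v = r • mApply A v := by
  ext i; simp [mApply, Matrix.smul_mulVec]

lemma mApply_one {ι : Type*} [Fintype ι] [DecidableEq ι]
    (v : EuclideanSpace ℂ ι) : mApply (1 : Matrix ι ι ℂ) v = v := by
  ext i; simp [mApply]

lemma inner_mApply {ι : Type*} [Fintype ι] (A : Matrix ι ι ℂ) (u v : EuclideanSpace ℂ ι) :
    inner ℂ (mApply A u) v = inner ℂ u (mApply Aᴴ v) := by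
  rw [EuclideanSpace.inner_eq_star_dotProduct, EuclideanSpace.inner_eq_star_dotProduct]
  simp only [mApply, WithLp.equiv_symm_apply, WithLp.equiv_apply]
  rw [Matrix.star_mulVec, dotProduct_comm, ← Matrix.dotProduct_mulVec, dotProduct_comm]

lemma mApply_sym {ι : Type*} [Fintype ι] {A : Matrix ι ι ℂ} (hA : A.IsHermitian)
    (u v : EuclideanSpace ℂ ι) :
    inner ℂ (mApply A u) v = inner ℂ u (mApply A v) := by
  rw [inner_mApply, hA.eq]

lemma mApply_norm {ι : Type*} [Fintype ι] [DecidableEq ι] {A : Matrix ι ι ℂ} (hA : A.IsHermitian)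
    (hA2 : A * A = 1) (v : EuclideanSpace ℂ ι) : ‖mApply A v‖ = ‖v‖ := by
  rw [@norm_eq_sqrt_re_inner ℂ, @norm_eq_sqrt_re_inner ℂ _ _ _ _ v, mApply_sym hA, ← mApply_mul, hA2, mApply_one]

lemma mApply_pos {ι : Type*} [Fintype ι] {A : Matrix ι ι ℂ} (hA : A.PosSemidef)
    (v : EuclideanSpace ℂ ι) : 0 ≤ (inner ℂ v (mApply A v)).re := by
  rw [EuclideanSpace.inner_eq_star_dotProduct, dotProduct_comm]
  exact hA.re_dotProduct_nonneg v.ofLp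

lemma norm_blocks {a b : Type*} [Fintype a] [Fintype b]
    (w : EuclideanSpace ℂ ((Fin 2 × a) × (Fin 2 × b))) (B : ℝ) (hB : 0 ≤ B)
    (h : ∀ i j, ‖(WithLp.toLp 2 (fun p : a × b => w ((i, p.1), (j, p.2))) : EuclideanSpace ℂ (a × b))‖ ≤ B) :
    ‖w‖ ≤ 2 * B := by
  have key : ‖w‖ ^ 2 = ∑ i, ∑ j,
      ‖(WithLp.toLp 2 (fun p : a × b => w ((i, p.1), (j, p.2))) : EuclideanSpace ℂ (a × b))‖ ^ 2 := by
    simp only [EuclideanSpace.norm_sq_eq, Fintype.sum_prod_type]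
    refine Finset.sum_congr rfl fun i _ => ?_
    rw [Finset.sum_comm]
  refine (pow_le_pow_iff_left₀ (norm_nonneg _) (by positivity) two_ne_zero).mp ?_
  rw [key]
  have h' : ∀ i j, ‖(WithLp.toLp 2 (fun p : a × b => w ((i, p.1), (j, p.2))) : EuclideanSpace ℂ (a × b))‖ ^ 2 ≤ B ^ 2 :=
    fun i j => pow_le_pow_left₀ (norm_nonneg _) (h i j) 2
  simp only [Fin.sum_univ_two]
  linarith [h' 0 0, h' 0 1, h' 1 0, h' 1 1]

/-- Blocks of the matrix swap isometry. -/
noncomputable def swapM {n : ℕ} (Z X : Matrix (Fin n) (Fin n) ℂ) : Fin 2 → Matrix (Fin n) (Fin n) ℂ :=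
  ![(1/2 : ℂ) • (1 + Z), (1/2 : ℂ) • (X * (1 - Z))]

/-- Matrix swap isometry. -/
noncomputable def swapV {n : ℕ} (Z X : Matrix (Fin n) (Fin n) ℂ) : Matrix (Fin 2 × Fin n) (Fin n) ℂ :=
  fun p a => swapM Z X p.1 p.2 a

lemma swapV_iso {n : ℕ} (Z X : Matrix (Fin n) (Fin n) ℂ) (hZ : Z.IsHermitian) (hZ2 : Z * Z = 1)
    (hX : X.IsHermitian) (hX2 : X * X = 1) : (swapV Z X)ᴴ * swapV Z X = 1 := by
  have e : (swapV Z X)ᴴ * swapV Z X = (swapM Z X 0)ᴴ * swapM Z X 0 + (swapM Z X 1)ᴴ * swapM Z X 1 := by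
    ext a b
    simp [Matrix.mul_apply, swapV, Fintype.sum_prod_type]
  rw [e]
  have h0 : (swapM Z X 0)ᴴ * swapM Z X 0 = (1/4 : ℂ) • ((1 + Z) * (1 + Z)) := by
    simp only [swapM, Matrix.cons_val_zero, Matrix.conjTranspose_smul, Matrix.conjTranspose_add,
      Matrix.conjTranspose_one, hZ.eq, Matrix.smul_mul, Matrix.mul_smul, smul_smul]
    norm_num
  have h1 : (swapM Z X 1)ᴴ * swapM Z X 1 = (1/4 : ℂ) • ((1 - Z) * (X * X) * (1 - Z)) := by
    simp [swapM, hZ.eq, hX.eq, smul_smul, Matrix.mul_assoc]; norm_num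
  rw [h0, h1, hX2]
  simp only [mul_add, add_mul, sub_mul, mul_sub, mul_one, one_mul, hZ2]
  module

lemma opL_kron {a b : ℕ} (A A' : Matrix (Fin a) (Fin a) ℂ) (B B' : Matrix (Fin b) (Fin b) ℂ)
    (v : EuclideanSpace ℂ (Fin a × Fin b)) :
    opL (A ⊗ₖ B) (opL (A' ⊗ₖ B') v) = opL ((A * A') ⊗ₖ (B * B')) v := by
  rw [opL_apply, opL_apply, opL_apply, ← mApply_mul, Matrix.mul_kronecker_mul]

lemma swapM_opA {a b : ℕ} (Z X : Matrix (Fin a) (Fin a) ℂ) (i : Fin 2)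
    (v : EuclideanSpace ℂ (Fin a × Fin b)) :
    opL (swapM Z X i ⊗ₖ (1 : Matrix (Fin b) (Fin b) ℂ)) v
      = swapT (opL (Z ⊗ₖ (1 : Matrix (Fin b) (Fin b) ℂ))) (opL (X ⊗ₖ (1 : Matrix (Fin b) (Fin b) ℂ))) i v := by
  fin_cases i
  · simp [swapT_zero, swapM, opL_apply, Matrix.smul_kronecker, Matrix.add_kronecker, mApply_add, mApply_smul, mApply_one]
  · simp only [Fin.mk_one, swapT_one, opL_kron]
    simp [swapM, opL_apply, Matrix.smul_kronecker, sub_kron, mApply_sub, mApply_smul, mul_sub]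

lemma swapM_opB {a b : ℕ} (Z X : Matrix (Fin b) (Fin b) ℂ) (i : Fin 2)
    (v : EuclideanSpace ℂ (Fin a × Fin b)) :
    opL ((1 : Matrix (Fin a) (Fin a) ℂ) ⊗ₖ swapM Z X i) v
      = swapT (opL ((1 : Matrix (Fin a) (Fin a) ℂ) ⊗ₖ Z)) (opL ((1 : Matrix (Fin a) (Fin a) ℂ) ⊗ₖ X)) i v := by
  fin_cases i
  · simp [swapT_zero, swapM, opL_apply, Matrix.kronecker_smul, Matrix.kronecker_add, mApply_add, mApply_smul, mApply_one]
  · simp only [Fin.mk_one, swapT_one, opL_kron]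
    simp [swapM, opL_apply, Matrix.kronecker_smul, kron_sub, mApply_sub, mApply_smul, mul_sub]

lemma kronA_herm {a b : ℕ} {A : Matrix (Fin a) (Fin a) ℂ} (hA : A.IsHermitian) :
    (A ⊗ₖ (1 : Matrix (Fin b) (Fin b) ℂ)).IsHermitian := by
  rw [Matrix.IsHermitian, Matrix.conjTranspose_kronecker, hA.eq, Matrix.conjTranspose_one]

lemma kronB_herm {a b : ℕ} {B : Matrix (Fin b) (Fin b) ℂ} (hB : B.IsHermitian) :
    ((1 : Matrix (Fin a) (Fin a) ℂ) ⊗ₖ B).IsHermitian := by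
  rw [Matrix.IsHermitian, Matrix.conjTranspose_kronecker, hB.eq, Matrix.conjTranspose_one]

lemma kronA_sq {a b : ℕ} {A : Matrix (Fin a) (Fin a) ℂ} (hA : A * A = 1) :
    (A ⊗ₖ (1 : Matrix (Fin b) (Fin b) ℂ)) * (A ⊗ₖ (1 : Matrix (Fin b) (Fin b) ℂ)) = 1 := by
  rw [← Matrix.mul_kronecker_mul, hA, one_mul, Matrix.one_kronecker_one]

lemma kronB_sq {a b : ℕ} {B : Matrix (Fin b) (Fin b) ℂ} (hB : B * B = 1) :
    ((1 : Matrix (Fin a) (Fin a) ℂ) ⊗ₖ B) * ((1 : Matrix (Fin a) (Fin a) ℂ) ⊗ₖ B) = 1 := by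
  rw [← Matrix.mul_kronecker_mul, hB, one_mul, Matrix.one_kronecker_one]

lemma opL_comm {a b : ℕ} (A : Matrix (Fin a) (Fin a) ℂ) (B : Matrix (Fin b) (Fin b) ℂ)
    (v : EuclideanSpace ℂ (Fin a × Fin b)) :
    opL (A ⊗ₖ (1 : Matrix (Fin b) (Fin b) ℂ)) (opL ((1 : Matrix (Fin a) (Fin a) ℂ) ⊗ₖ B) v)
      = opL ((1 : Matrix (Fin a) (Fin a) ℂ) ⊗ₖ B) (opL (A ⊗ₖ (1 : Matrix (Fin b) (Fin b) ℂ)) v) := by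
  rw [opL_kron, opL_kron]; simp

lemma main_c_s {nA nB : ℕ} (M₁ M₂ : Matrix (Fin nA) (Fin nA) ℂ) (N₁ N₂ : Matrix (Fin nB) (Fin nB) ℂ)
    (hM₁ : M₁.IsHermitian) (hM₁2 : M₁ * M₁ = 1) (hM₂ : M₂.IsHermitian) (hM₂2 : M₂ * M₂ = 1)
    (hN₁ : N₁.IsHermitian) (hN₁2 : N₁ * N₁ = 1) (hN₂ : N₂.IsHermitian) (hN₂2 : N₂ * N₂ = 1)
    (ψ : EuclideanSpace ℂ (Fin nA × Fin nB)) (hψ : ‖ψ‖ = 1)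
    (c s ε : ℝ) (hc : 0 < c) (hs : 0 < s) (hcs : c ^ 2 + s ^ 2 = 1)
    (h : 2 / s - ε ≤ (inner ℂ ψ (mApply (((c / s : ℝ) : ℂ) • (M₁ ⊗ₖ N₁) + ((c / s : ℝ) : ℂ) • (M₁ ⊗ₖ N₂) +
            M₂ ⊗ₖ N₁ - M₂ ⊗ₖ N₂) ψ) : ℂ).re) :
    ∃ (VA : Matrix (Fin 2 × Fin nA) (Fin nA) ℂ)
        (VB : Matrix (Fin 2 × Fin nB) (Fin nB) ℂ)
        (junk : EuclideanSpace ℂ (Fin nA × Fin nB)),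
        VAᴴ * VA = 1 ∧ VBᴴ * VB = 1 ∧ ‖junk‖ = 1 ∧
        ∀ x y : Fin 3,
          ‖mApply (VA ⊗ₖ VB) (mApply ((![1, M₁, M₂] x) ⊗ₖ (![1, N₁, N₂] y)) ψ) -
            (WithLp.equiv 2 ((Fin 2 × Fin nA) × (Fin 2 × Fin nB) → ℂ)).symm
              (fun p => ((sigA x ⊗ₖ tauB c s y).mulVec
                    (fun q : Fin 2 × Fin 2 => if q.1 = q.2 then ((Real.sqrt 2 : ℂ))⁻¹ else 0))
                  (p.1.1, p.2.1) *
                (WithLp.equiv 2 (Fin nA × Fin nB → ℂ)) junk (p.1.2, p.2.2))‖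
          ≤ 2 * (200 * (Real.sqrt (2 * ε * s) / (c * s))) := by
  obtain ⟨Z, hZ, hZ2, hZc, hZp⟩ := exists_sgn (N₁ + N₂) (hN₁.add hN₂)
  obtain ⟨X, hX, hX2, hXc, hXp⟩ := exists_sgn (N₁ - N₂) (hN₁.sub hN₂)
  have pos1 : ((1 : Matrix (Fin nA) (Fin nA) ℂ)).PosSemidef := Matrix.PosSemidef.one
  have addB : ∀ v : EuclideanSpace ℂ (Fin nA × Fin nB),
      opL ((1 : Matrix (Fin nA) (Fin nA) ℂ) ⊗ₖ N₁) v + opL ((1 : Matrix (Fin nA) (Fin nA) ℂ) ⊗ₖ N₂) v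
        = opL ((1 : Matrix (Fin nA) (Fin nA) ℂ) ⊗ₖ (N₁ + N₂)) v := by
    intro v; rw [opL_apply, opL_apply, opL_apply, Matrix.kronecker_add, mApply_add]
  have subB : ∀ v : EuclideanSpace ℂ (Fin nA × Fin nB),
      opL ((1 : Matrix (Fin nA) (Fin nA) ℂ) ⊗ₖ N₁) v - opL ((1 : Matrix (Fin nA) (Fin nA) ℂ) ⊗ₖ N₂) v
        = opL ((1 : Matrix (Fin nA) (Fin nA) ℂ) ⊗ₖ (N₁ - N₂)) v := by
    intro v; rw [opL_apply, opL_apply, opL_apply, kron_sub, mApply_sub]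
  have sq : ∀ {A : Matrix (Fin nA × Fin nB) (Fin nA × Fin nB) ℂ}, A * A = 1 → ∀ v, opL A (opL A v) = v := by
    intro A hA v; rw [opL_apply, opL_apply, ← mApply_mul, hA, mApply_one]
  obtain ⟨junk, hj, hmain⟩ := core (opL (M₁ ⊗ₖ (1 : Matrix (Fin nB) (Fin nB) ℂ)))
    (opL (M₂ ⊗ₖ (1 : Matrix (Fin nB) (Fin nB) ℂ)))
    (opL ((1 : Matrix (Fin nA) (Fin nA) ℂ) ⊗ₖ N₁)) (opL ((1 : Matrix (Fin nA) (Fin nA) ℂ) ⊗ₖ N₂))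
    (opL ((1 : Matrix (Fin nA) (Fin nA) ℂ) ⊗ₖ Z)) (opL ((1 : Matrix (Fin nA) (Fin nA) ℂ) ⊗ₖ X))
    (mApply_norm (kronA_herm hM₁) (kronA_sq hM₁2)) (sq (kronA_sq hM₁2)) (mApply_sym (kronA_herm hM₁))
    (mApply_norm (kronA_herm hM₂) (kronA_sq hM₂2)) (sq (kronA_sq hM₂2)) (mApply_sym (kronA_herm hM₂))
    (mApply_norm (kronB_herm hN₁) (kronB_sq hN₁2)) (sq (kronB_sq hN₁2))
    (mApply_norm (kronB_herm hN₂) (kronB_sq hN₂2))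
    (mApply_norm (kronB_herm hZ) (kronB_sq hZ2)) (sq (kronB_sq hZ2)) (mApply_sym (kronB_herm hZ))
    (mApply_norm (kronB_herm hX) (kronB_sq hX2)) (sq (kronB_sq hX2)) (mApply_sym (kronB_herm hX))
    (opL_comm _ _) (opL_comm _ _) (opL_comm _ _) (opL_comm _ _)
    (opL_comm _ _) (opL_comm _ _) (opL_comm _ _) (opL_comm _ _)
    (by intro v; rw [addB, addB, opL_kron, opL_kron, hZc])
    (by intro v; rw [subB, subB, opL_kron, opL_kron, hXc])
    (by intro v; rw [addB, opL_kron, one_mul]; exact mApply_pos (pos1.kronecker hZp) v)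
    (by intro v; rw [subB, opL_kron, one_mul]; exact mApply_pos (pos1.kronecker hXp) v)
    ψ hψ c s ε hc hs hcs
    (by
      simp only [opL_kron, one_mul, mul_one]
      simp only [opL_apply]
      simp only [mApply_add, mApply_sub, mApply_smul, inner_add_right, inner_sub_right, inner_smul_right,
        Complex.add_re, Complex.sub_re, Complex.re_ofReal_mul] at h
      exact h)
  refine ⟨swapV M₁ M₂, swapV Z X, junk, swapV_iso _ _ hM₁ hM₁2 hM₂ hM₂2, swapV_iso _ _ hZ hZ2 hX hX2, hj, ?_⟩
  intro x y
  refine norm_blocks _ _ (by positivity) ?_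
  intro i j
  refine le_trans (le_of_eq ?_) (hmain x y i j)
  congr 1
  have hx : ∀ v : EuclideanSpace ℂ (Fin nA × Fin nB),
      (![LinearMap.id, opL (M₁ ⊗ₖ (1 : Matrix (Fin nB) (Fin nB) ℂ)), opL (M₂ ⊗ₖ (1 : Matrix (Fin nB) (Fin nB) ℂ))] :
        Fin 3 → (EuclideanSpace ℂ (Fin nA × Fin nB) →ₗ[ℂ] EuclideanSpace ℂ (Fin nA × Fin nB))) x v
      = opL ((![1, M₁, M₂] x) ⊗ₖ (1 : Matrix (Fin nB) (Fin nB) ℂ)) v := by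
    intro v; fin_cases x <;> simp [opL_apply, mApply_one]
  have hy : ∀ v : EuclideanSpace ℂ (Fin nA × Fin nB),
      (![LinearMap.id, opL ((1 : Matrix (Fin nA) (Fin nA) ℂ) ⊗ₖ N₁), opL ((1 : Matrix (Fin nA) (Fin nA) ℂ) ⊗ₖ N₂)] :
        Fin 3 → (EuclideanSpace ℂ (Fin nA × Fin nB) →ₗ[ℂ] EuclideanSpace ℂ (Fin nA × Fin nB))) y v
      = opL ((1 : Matrix (Fin nA) (Fin nA) ℂ) ⊗ₖ (![1, N₁, N₂] y)) v := by
    intro v; fin_cases y <;> simp [opL_apply, mApply_one]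
  have hcomb : opL (swapM M₁ M₂ i ⊗ₖ (1 : Matrix (Fin nB) (Fin nB) ℂ))
      (opL ((1 : Matrix (Fin nA) (Fin nA) ℂ) ⊗ₖ swapM Z X j)
        (opL ((![1, M₁, M₂] x) ⊗ₖ (1 : Matrix (Fin nB) (Fin nB) ℂ))
          (opL ((1 : Matrix (Fin nA) (Fin nA) ℂ) ⊗ₖ (![1, N₁, N₂] y)) ψ)))
      = opL (swapM M₁ M₂ i ⊗ₖ swapM Z X j) (opL ((![1, M₁, M₂] x) ⊗ₖ (![1, N₁, N₂] y)) ψ) := by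
    simp only [opL_kron, one_mul, mul_one]
  rw [hx, hy, ← swapM_opB, ← swapM_opA, hcomb, opL_apply, opL_apply]
  generalize mApply ((![1, M₁, M₂] x) ⊗ₖ (![1, N₁, N₂] y)) ψ = φ
  ext ⟨a, b⟩
  have hco : ((sigA x ⊗ₖ tauB c s y).mulVec
      (fun q : Fin 2 × Fin 2 => if q.1 = q.2 then ((Real.sqrt 2 : ℂ))⁻¹ else 0)) (i, j)
      = ∑ l, ∑ k, sigA x i l * tauB c s y j k * (if l = k then ((Real.sqrt 2 : ℂ))⁻¹ else 0) := by
    simp only [Matrix.mulVec, dotProduct, Fintype.sum_prod_type, Matrix.kroneckerMap_apply]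
  rw [← hco]
  rfl



theorem bound_aux (c s ε : ℝ) (hc : 0 < c) (hs : 0 < s) (hcs : c ^ 2 + s ^ 2 = 1) (hε : 0 ≤ ε) :
    2 * (200 * (Real.sqrt (2 * ε * s) / (c * s))) ≤
      800 * (1 / (c ^ 2 * s ^ ((1 : ℝ) / 2)) + 1 / s ^ ((3 : ℝ) / 2)) * Real.sqrt ε := by
  have hc1 : c ≤ 1 := by nlinarith
  rw [← Real.sqrt_eq_rpow]
  have hr : 0 < Real.sqrt s := Real.sqrt_pos.mpr hs
  have hrr : Real.sqrt s * Real.sqrt s = s := Real.mul_self_sqrt hs.le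
  have h2 : Real.sqrt 2 ≤ 2 := by rw [Real.sqrt_le_left (by norm_num)]; norm_num
  have hp : 0 ≤ 1 / s ^ ((3 : ℝ) / 2) := by positivity
  have e : Real.sqrt (2 * ε * s) / (c * s) = Real.sqrt 2 * Real.sqrt ε * (1 / (c * Real.sqrt s)) := by
    rw [Real.sqrt_mul (by positivity), Real.sqrt_mul (by norm_num)]
    field_simp
    rw [sq, hrr]
  have h3 : 1 / (c * Real.sqrt s) ≤ 1 / (c ^ 2 * Real.sqrt s) := by
    apply one_div_le_one_div_of_le (by positivity)
    gcongr
    nlinarith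
  have hse := Real.sqrt_nonneg ε
  rw [e]
  calc 2 * (200 * (Real.sqrt 2 * Real.sqrt ε * (1 / (c * Real.sqrt s))))
      ≤ 2 * (200 * (2 * Real.sqrt ε * (1 / (c ^ 2 * Real.sqrt s) + 1 / s ^ ((3 : ℝ) / 2)))) := by
        gcongr; linarith
    _ = _ := by ring

end Concrete

/-- Robust self-testing of the weighted CHSH inequality.
`H_A = ℂ^{nA}`, `H_B = ℂ^{nB}`, `K_A = ℂ^{kA}`, `K_B = ℂ^{kB}`; tensor products of spaces
are realized by product index types and tensor products of operators by Kronecker products.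
The isometries `V_A : H_A → ℂ² ⊗ K_A`, `V_B : H_B → ℂ² ⊗ K_B` are matrices `VA`, `VB` with
`VAᴴ * VA = 1`, `VBᴴ * VB = 1`.  The vector `((M̃_x ⊗ Ñ_y)|EPR⟩) ⊗ junk`, viewed in
`(ℂ² ⊗ K_A) ⊗ (ℂ² ⊗ K_B)`, has components
`((M̃_x ⊗ Ñ_y)EPR)(i,j) * junk(a,b)` at index `((i,a),(j,b))`. -/
theorem stmt_16 :
    ∃ K : ℝ, 0 < K ∧
      ∀ (α : ℝ), 0 < α → ∀ (μ : ℝ), μ = Real.arctan (1 / α) →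
      ∀ (ε : ℝ), 0 ≤ ε →
      ∀ (nA nB : ℕ)
        (M₁ M₂ : Matrix (Fin nA) (Fin nA) ℂ)
        (N₁ N₂ : Matrix (Fin nB) (Fin nB) ℂ),
        M₁.IsHermitian → M₁ * M₁ = 1 → M₂.IsHermitian → M₂ * M₂ = 1 →
        N₁.IsHermitian → N₁ * N₁ = 1 → N₂.IsHermitian → N₂ * N₂ = 1 →
      ∀ (ψ : EuclideanSpace ℂ (Fin nA × Fin nB)), ‖ψ‖ = 1 →
        2 * Real.sqrt (1 + α ^ 2) - ε ≤
          (inner ℂ ψ (mApply ((α : ℂ) • (M₁ ⊗ₖ N₁) + (α : ℂ) • (M₁ ⊗ₖ N₂) +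
            M₂ ⊗ₖ N₁ - M₂ ⊗ₖ N₂) ψ) : ℂ).re →
      ∃ (kA kB : ℕ)
        (VA : Matrix (Fin 2 × Fin kA) (Fin nA) ℂ)
        (VB : Matrix (Fin 2 × Fin kB) (Fin nB) ℂ)
        (junk : EuclideanSpace ℂ (Fin kA × Fin kB)),
        VAᴴ * VA = 1 ∧ VBᴴ * VB = 1 ∧ ‖junk‖ = 1 ∧
        ∀ x y : Fin 3,
          ‖mApply (VA ⊗ₖ VB) (mApply ((![1, M₁, M₂] x) ⊗ₖ (![1, N₁, N₂] y)) ψ) -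
            (WithLp.equiv 2 ((Fin 2 × Fin kA) × (Fin 2 × Fin kB) → ℂ)).symm
              (fun p => ((![1, !![1, 0; 0, -1], !![0, 1; 1, 0]] x ⊗ₖ
                  ![1, (Real.cos μ : ℂ) • !![1, 0; 0, -1] + (Real.sin μ : ℂ) • !![0, 1; 1, 0],
                      (Real.cos μ : ℂ) • !![1, 0; 0, -1] - (Real.sin μ : ℂ) • !![0, 1; 1, 0]] y).mulVec
                    (fun q : Fin 2 × Fin 2 => if q.1 = q.2 then ((Real.sqrt 2 : ℂ))⁻¹ else 0))
                  (p.1.1, p.2.1) *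
                (WithLp.equiv 2 (Fin kA × Fin kB → ℂ)) junk (p.1.2, p.2.2))‖
          ≤ K * (1 / (Real.cos μ ^ 2 * Real.sin μ ^ ((1 : ℝ) / 2)) +
              1 / Real.sin μ ^ ((3 : ℝ) / 2)) * Real.sqrt ε := by
  refine ⟨800, by norm_num, ?_⟩
  intro α hα μ hμ ε hε nA nB M₁ M₂ N₁ N₂ hM₁ hM₁2 hM₂ hM₂2 hN₁ hN₁2 hN₂ hN₂2 ψ hψ h
  have hw : 0 < Real.sqrt (1 + α ^ 2) := Real.sqrt_pos.mpr (by positivity)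
  have hww : Real.sqrt (1 + α ^ 2) ^ 2 = 1 + α ^ 2 := Real.sq_sqrt (by positivity)
  have hμ1 : -(Real.pi / 2) < μ := by rw [hμ]; exact Real.neg_pi_div_two_lt_arctan _
  have hμ2 : μ < Real.pi / 2 := by rw [hμ]; exact Real.arctan_lt_pi_div_two _
  have hμ0 : 0 < μ := by rw [hμ]; exact Real.arctan_pos.mpr (by positivity)
  have hc : 0 < Real.cos μ := Real.cos_pos_of_mem_Ioo ⟨hμ1, hμ2⟩
  have hs : 0 < Real.sin μ := Real.sin_pos_of_pos_of_lt_pi hμ0 (by linarith [Real.pi_pos])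
  have hcs : Real.cos μ ^ 2 + Real.sin μ ^ 2 = 1 := Real.cos_sq_add_sin_sq μ
  have htan : Real.sin μ / Real.cos μ = 1 / α := by
    rw [← Real.tan_eq_sin_div_cos, hμ, Real.tan_arctan]
  have hcα : Real.cos μ = α * Real.sin μ := by
    rw [div_eq_div_iff hc.ne' hα.ne'] at htan; linarith
  have hα' : α = Real.cos μ / Real.sin μ := by rw [hcα]; field_simp
  have hw' : Real.sqrt (1 + α ^ 2) = 1 / Real.sin μ := by
    rw [Real.sqrt_eq_iff_eq_sq (by positivity) (by positivity)]
    rw [hα']; field_simp; linarith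
  obtain ⟨VA, VB, junk, hVA, hVB, hj, hmain⟩ := main_c_s M₁ M₂ N₁ N₂ hM₁ hM₁2 hM₂ hM₂2 hN₁ hN₁2 hN₂ hN₂2
    ψ hψ (Real.cos μ) (Real.sin μ) ε hc hs hcs (by
      rw [hw'] at h
      rw [← hα']
      refine le_trans (le_of_eq ?_) h
      ring)
  refine ⟨nA, nB, VA, VB, junk, hVA, hVB, hj, ?_⟩
  intro x y
  exact (hmain x y).trans (bound_aux _ _ _ hc hs hcs hε)
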